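/- For every positive integer n and every integer s ≥ 6, r_s(n) ≤ (3·(4.11)^s / (25·√(s!)))·(n+s)^{s/2 − 1}. -/

import Mathlib

/-!
Jacobi's six-square theorem gives the case `s = 6`; the other cases follow from it by splitting off
one coordinate at a time.

*Six squares.* All coordinates contribute equally to `∑ |x|²` over the representations of `n` by
seven squares, so `∑ₘ (n - 7 m²) r₆(n - m²) = 0` for every `n` (`reps_recurrence`); together with
`r₆(0) = 1` this determines `r₆` (`recurrence_unique`). Jacobi's divisor sum
`a(k) = 4 ∑_{d e = k} χ(e) (4 d² - e²)` satisfies the same recurrence (`jacobiSix_recurrence`),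
which is an identity of Liouville type for sums over `m² + d e = n`, `d, e > 0`, that is, over the
forms `f = d x² + 2 m x y - e y²` of discriminant `4 n` with `f(1,0) > 0 > f(0,1)`. The values
`A = f(1,0)`, `B = f(0,1)`, `C = f(1,-1)` determine `f`, and the discriminant is symmetric in them.
Hence for an alternating function of `(A, B, C)` the terms with `C > 0` cancel under `A ↔ C` and
those with `C < 0` under `B ↔ C`; only the terms with `C = 0` remain, and they occur only when `n`
is a square (`sum_altForm`). The cyclic sum of
`χ(A) (B - C) (B + C - A) (A² - 2 A (B + C) + 4 B C)` is such a function, and its average over the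
symmetries `m ↦ -m` and `d ↔ e` is exactly the weight in the recurrence (`sum_altForm_eq_wt`).

*Size of `r₆`.* In `a(n) = 16 ∑ χ(n/d) d² - 4 ∑ χ(d) d²` both sums, with the signs they carry, are
at most `n² ∑ 1/(4j+1)² < 1.0758 n²`. Hence `r₆(n) ≤ 21.516 (n + 6)²` (`card_reps_six_le`), while
the constant claimed for `s = 6` is about `21.556`.

*From `s` to `s + 1`.* With `N = n + s` and `p = s/2 - 1`, the bound for `s` squares reduces the
claim to an estimate of `∑ₘ (N - m²)^p`. Each term is at most
`(N + 1)^p exp (-p (m² + 1) / (N + 1))`, and the resulting theta series is bounded by a Gaussian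
integral (`gaussian_sum_le`). The factor `4.11 / √(s + 1)` by which the constant grows absorbs the
result (`step_ineq`).
-/

open Real

/-- `r s n` is the number of representations of `n` as an ordered sum of `s` integer squares. -/
noncomputable def sumOfSquaresRep (s n : ℕ) : ℕ :=
  Set.ncard {x : Fin s → ℤ | ∑ i, x i ^ 2 = (n : ℤ)}

/-! ### A Liouville-type identity over indefinite binary forms -/

/-- The non-principal character modulo `4`, as a function on `ℤ`. -/
def chi (a : ℤ) : ℤ := ZMod.χ₄ (a : ZMod 4)

lemma chi_neg (a : ℤ) : chi (-a) = -chi a := by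
  unfold chi
  push_cast
  generalize (a : ZMod 4) = x
  revert x
  decide

lemma chi_add_four_mul (a b : ℤ) : chi (a + 4 * b) = chi a := by
  unfold chi
  push_cast
  rw [show (4 : ZMod 4) = 0 by decide, zero_mul, add_zero]

/-- The quartic kernel, antisymmetric in its last two arguments. -/
def quart (A B C : ℤ) : ℤ := (B - C) * (B + C - A) * (A ^ 2 - 2 * A * (B + C) + 4 * B * C)

/-- The alternating function of `(A, B, C)` that drives the Liouville-type identity. -/
def alt (A B C : ℤ) : ℤ := chi A * quart A B C + chi B * quart B C A + chi C * quart C A B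

lemma alt_swap_left (A B C : ℤ) : alt C B A = -alt A B C := by
  unfold alt quart; ring

lemma alt_swap_right (A B C : ℤ) : alt A C B = -alt A B C := by
  unfold alt quart; ring

/-- Triples `(m, d, e)` with `d, e > 0` and `m² + d e = n`: the forms `d x² + 2 m x y - e y²` of
discriminant `4 n` with `d > 0 > -e`. The box only serves to make the set visibly finite. -/
noncomputable def simpleForms (n : ℤ) : Finset (ℤ × ℤ × ℤ) :=
  (Finset.Icc (-n) n ×ˢ Finset.Icc 1 n ×ˢ Finset.Icc 1 n).filter
    fun t => t.1 ^ 2 + t.2.1 * t.2.2 = n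

lemma mem_simpleForms {n m d e : ℤ} :
    (m, d, e) ∈ simpleForms n ↔ 0 < d ∧ 0 < e ∧ m ^ 2 + d * e = n := by
  simp only [simpleForms, Finset.mem_filter, Finset.mem_product, Finset.mem_Icc]
  constructor
  · rintro ⟨⟨_, ⟨h1, _⟩, h2, _⟩, h3⟩
    exact ⟨by omega, by omega, h3⟩
  · rintro ⟨h1, h2, h3⟩
    have := mul_pos h1 h2
    refine ⟨⟨⟨?_, ?_⟩, ⟨by omega, ?_⟩, by omega, ?_⟩, h3⟩ <;> nlinarith [sq_nonneg m, sq_nonneg (m+1), sq_nonneg (m-1)]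

/-- `alt` evaluated at the values `f(1,0)`, `f(0,1)`, `f(1,-1)` of the form `f` given by
`(m, d, e)`. -/
def altForm (t : ℤ × ℤ × ℤ) : ℤ := alt t.2.1 (-t.2.2) (t.2.1 - 2 * t.1 - t.2.2)

/-- Where `f(1,-1) > 0`, exchanging `f(1,0)` and `f(1,-1)` is an involution reversing the sign of
`altForm`. -/
lemma sum_altForm_pos (n : ℤ) :
    ∑ t ∈ (simpleForms n).filter (fun t => 0 < t.2.1 - 2 * t.1 - t.2.2), altForm t = 0 := by
  have key : ∑ t ∈ (simpleForms n).filter (fun t => 0 < t.2.1 - 2 * t.1 - t.2.2), altForm t =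
      ∑ t ∈ (simpleForms n).filter (fun t => 0 < t.2.1 - 2 * t.1 - t.2.2), -altForm t := by
    refine Finset.sum_nbij' (fun t => (-t.1 - t.2.2, t.2.1 - 2 * t.1 - t.2.2, t.2.2))
      (fun t => (-t.1 - t.2.2, t.2.1 - 2 * t.1 - t.2.2, t.2.2)) ?_ ?_ ?_ ?_ ?_
    · rintro ⟨m, d, e⟩ h
      simp only [Finset.mem_filter, mem_simpleForms] at h ⊢
      obtain ⟨⟨h1, h2, h3⟩, h4⟩ := h
      exact ⟨⟨h4, h2, by rw [← h3]; ring⟩, by linarith⟩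
    · rintro ⟨m, d, e⟩ h
      simp only [Finset.mem_filter, mem_simpleForms] at h ⊢
      obtain ⟨⟨h1, h2, h3⟩, h4⟩ := h
      exact ⟨⟨h4, h2, by rw [← h3]; ring⟩, by linarith⟩
    · rintro ⟨m, d, e⟩ -
      ext <;> simp only <;> ring
    · rintro ⟨m, d, e⟩ -
      ext <;> simp only <;> ring
    · rintro ⟨m, d, e⟩ -
      simp only [altForm]
      rw [show d - 2 * m - e - 2 * (-m - e) - e = d by ring,
        alt_swap_left d (-e) (d - 2 * m - e), neg_neg]
  rw [Finset.sum_neg_distrib] at key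
  linarith

/-- Where `f(1,-1) < 0`, exchanging `f(0,1)` and `f(1,-1)` is an involution reversing the sign of
`altForm`. -/
lemma sum_altForm_neg (n : ℤ) :
    ∑ t ∈ (simpleForms n).filter (fun t => t.2.1 - 2 * t.1 - t.2.2 < 0), altForm t = 0 := by
  have key : ∑ t ∈ (simpleForms n).filter (fun t => t.2.1 - 2 * t.1 - t.2.2 < 0), altForm t =
      ∑ t ∈ (simpleForms n).filter (fun t => t.2.1 - 2 * t.1 - t.2.2 < 0), -altForm t := by
    refine Finset.sum_nbij' (fun t => (t.2.1 - t.1, t.2.1, t.2.2 + 2 * t.1 - t.2.1))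
      (fun t => (t.2.1 - t.1, t.2.1, t.2.2 + 2 * t.1 - t.2.1)) ?_ ?_ ?_ ?_ ?_
    · rintro ⟨m, d, e⟩ h
      simp only [Finset.mem_filter, mem_simpleForms] at h ⊢
      obtain ⟨⟨h1, h2, h3⟩, h4⟩ := h
      exact ⟨⟨h1, by linarith, by rw [← h3]; ring⟩, by linarith⟩
    · rintro ⟨m, d, e⟩ h
      simp only [Finset.mem_filter, mem_simpleForms] at h ⊢
      obtain ⟨⟨h1, h2, h3⟩, h4⟩ := h
      exact ⟨⟨h1, by linarith, by rw [← h3]; ring⟩, by linarith⟩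
    · rintro ⟨m, d, e⟩ -
      ext <;> simp only <;> ring
    · rintro ⟨m, d, e⟩ -
      ext <;> simp only <;> ring
    · rintro ⟨m, d, e⟩ -
      simp only [altForm]
      rw [show d - 2 * (d - m) - (e + 2 * m - d) = -e by ring,
        show -(e + 2 * m - d) = d - 2 * m - e by ring,
        alt_swap_right d (-e) (d - 2 * m - e), neg_neg]
  rw [Finset.sum_neg_distrib] at key
  linarith

lemma sum_altForm (n : ℤ) :
    ∑ t ∈ simpleForms n, altForm t =
      ∑ t ∈ (simpleForms n).filter (fun t => t.2.1 - 2 * t.1 - t.2.2 = 0), altForm t := by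
  rw [← Finset.sum_filter_add_sum_filter_not (simpleForms n)
      (fun t => 0 < t.2.1 - 2 * t.1 - t.2.2), sum_altForm_pos, zero_add,
    ← Finset.sum_filter_add_sum_filter_not ((simpleForms n).filter _)
      (fun t => t.2.1 - 2 * t.1 - t.2.2 < 0), Finset.filter_filter, Finset.filter_filter]
  have h1 : (simpleForms n).filter (fun t => ¬ 0 < t.2.1 - 2 * t.1 - t.2.2 ∧
      t.2.1 - 2 * t.1 - t.2.2 < 0) =
      (simpleForms n).filter (fun t => t.2.1 - 2 * t.1 - t.2.2 < 0) :=
    Finset.filter_congr fun t _ => by omega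
  have h2 : (simpleForms n).filter (fun t => ¬ 0 < t.2.1 - 2 * t.1 - t.2.2 ∧
      ¬ t.2.1 - 2 * t.1 - t.2.2 < 0) =
      (simpleForms n).filter (fun t => t.2.1 - 2 * t.1 - t.2.2 = 0) :=
    Finset.filter_congr fun t _ => by omega
  rw [h1, h2, sum_altForm_neg, zero_add]

lemma sum_simpleForms_neg (n : ℤ) (f : ℤ × ℤ × ℤ → ℤ) :
    ∑ t ∈ simpleForms n, f (-t.1, t.2) = ∑ t ∈ simpleForms n, f t := by
  refine Finset.sum_nbij' (fun t => (-t.1, t.2)) (fun t => (-t.1, t.2)) ?_ ?_ ?_ ?_ ?_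
  · rintro ⟨m, d, e⟩ h
    simpa only [mem_simpleForms, neg_sq] using h
  · rintro ⟨m, d, e⟩ h
    simpa only [mem_simpleForms, neg_sq] using h
  · rintro ⟨m, d, e⟩ -
    simp
  · rintro ⟨m, d, e⟩ -
    simp
  · simp

lemma sum_simpleForms_swap (n : ℤ) (f : ℤ × ℤ × ℤ → ℤ) :
    ∑ t ∈ simpleForms n, f (t.1, t.2.2, t.2.1) = ∑ t ∈ simpleForms n, f t := by
  refine Finset.sum_nbij' (fun t => (t.1, t.2.2, t.2.1)) (fun t => (t.1, t.2.2, t.2.1))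
    ?_ ?_ ?_ ?_ ?_
  · rintro ⟨m, d, e⟩ h
    rw [mem_simpleForms] at h ⊢
    exact ⟨h.2.1, h.1, by rw [mul_comm]; exact h.2.2⟩
  · rintro ⟨m, d, e⟩ h
    rw [mem_simpleForms] at h ⊢
    exact ⟨h.2.1, h.1, by rw [mul_comm]; exact h.2.2⟩
  · rintro ⟨m, d, e⟩ -
    simp
  · rintro ⟨m, d, e⟩ -
    simp
  · simp

/-- The weight through which the six-square recurrence sees a triple `(m, d, e)`. -/
def wt (t : ℤ × ℤ × ℤ) : ℤ :=
  chi t.2.2 * (4 * t.2.1 ^ 2 - t.2.2 ^ 2) * (t.2.1 * t.2.2 - 6 * t.1 ^ 2)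

/-- Averaging over `m ↦ -m` and exchanging `d` and `e` turns `altForm` into `4 * wt`. -/
lemma sum_altForm_eq_wt (n : ℤ) :
    ∑ t ∈ simpleForms n, altForm t = 4 * ∑ t ∈ simpleForms n, wt t := by
  have h1 := sum_simpleForms_neg n altForm
  have h2 := sum_simpleForms_swap n wt
  have h3 : ∑ t ∈ simpleForms n, (altForm t + altForm (-t.1, t.2)) =
      ∑ t ∈ simpleForms n, (4 * wt t + 4 * wt (t.1, t.2.2, t.2.1)) := by
    refine Finset.sum_congr rfl ?_
    rintro ⟨m, d, e⟩ -
    -- The reflection changes `C = d - 2 m - e` by the multiple `4 m` of `4`, so the term of `alt`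
    -- carrying `chi C` is odd in `m` and cancels.
    have hc : chi (d - 2 * -m - e) = chi (d - 2 * m - e) := by
      rw [← chi_add_four_mul (d - 2 * m - e) m]; congr 1; ring
    simp only [altForm, alt, wt, quart, hc, chi_neg]
    ring
  rw [Finset.sum_add_distrib, Finset.sum_add_distrib, ← Finset.mul_sum, ← Finset.mul_sum, h1,
    h2] at h3
  linarith

/-! ### Forms with `f(1,-1) = 0` -/

lemma chi_two_mul (k : ℤ) : chi (2 * k) = 0 := by
  unfold chi
  push_cast
  generalize (k : ZMod 4) = x
  revert x
  decide

lemma chi_odd (k : ℕ) : chi (2 * k + 1) = (-1) ^ k := by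
  induction k with
  | zero => decide
  | succ k ih =>
    rw [pow_succ, ← ih]
    unfold chi
    push_cast
    generalize (k : ZMod 4) = x
    revert x
    decide

lemma sum_chi_cubic (K : ℤ) (k : ℕ) :
    ∑ d ∈ Finset.range (2 * k), chi d * (d * (2 * K - d) * (4 * K - d)) =
      3 * K - (-1) ^ k * (4 * k ^ 3 - 3 * k - 12 * K * k ^ 2 + 3 * K + 8 * K ^ 2 * k) := by
  induction k with
  | zero => simp
  | succ k ih =>
    rw [mul_add, mul_one, Finset.sum_range_succ, Finset.sum_range_succ, ih]
    have h1 : chi ((2 * k : ℕ) : ℤ) = 0 := by push_cast; exact chi_two_mul k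
    have h2 : chi ((2 * k + 1 : ℕ) : ℤ) = (-1) ^ k := by push_cast; exact chi_odd k
    rw [h1, h2]
    push_cast
    ring

/-- The forms with `f(1,-1) = 0` have square discriminant `(2K)²` and are parametrised by `d` with
`d + e = 2K`. -/
lemma sum_boundary_sq (K : ℕ) :
    ∑ t ∈ (simpleForms ((K : ℤ) ^ 2)).filter (fun t => t.2.1 - 2 * t.1 - t.2.2 = 0), altForm t =
      12 * (K : ℤ) ^ 2 := by
  have h1 : ∑ t ∈ (simpleForms ((K : ℤ) ^ 2)).filter (fun t => t.2.1 - 2 * t.1 - t.2.2 = 0),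
      altForm t = ∑ d ∈ Finset.Ico 1 (2 * K), altForm ((d : ℤ) - K, (d : ℤ), 2 * K - d) := by
    have key : ∀ m d e : ℤ, 0 < d → 0 < e → m ^ 2 + d * e = (K : ℤ) ^ 2 →
        d - 2 * m - e = 0 → d + e = 2 * K := by
      intro m d e hd he h h0
      have h2 : e = d - 2 * m := by linarith
      subst h2
      have h3 : (d - m) ^ 2 = (K : ℤ) ^ 2 := by rw [← h]; ring
      have h4 : d - m = K := by
        refine (sq_eq_sq₀ ?_ ?_).mp h3
        · linarith
        · positivity
      linarith
    refine Finset.sum_nbij' (fun t => t.2.1.toNat) (fun d => ((d : ℤ) - K, (d : ℤ), 2 * K - d))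
      ?_ ?_ ?_ ?_ ?_
    · rintro ⟨m, d, e⟩ h
      simp only [Finset.mem_filter, mem_simpleForms, Finset.mem_Ico] at h ⊢
      obtain ⟨⟨h1, h2, h3⟩, h4⟩ := h
      have := key m d e h1 h2 h3 h4
      omega
    · intro d h
      simp only [Finset.mem_filter, mem_simpleForms, Finset.mem_Ico] at h ⊢
      exact ⟨⟨by omega, by omega, by ring⟩, by ring⟩
    · rintro ⟨m, d, e⟩ h
      simp only [Finset.mem_filter, mem_simpleForms] at h
      obtain ⟨⟨h1, h2, h3⟩, h4⟩ := h
      have := key m d e h1 h2 h3 h4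
      simp only [Prod.mk.injEq]
      omega
    · intro d _
      simp
    · rintro ⟨m, d, e⟩ h
      simp only [Finset.mem_filter, mem_simpleForms] at h
      obtain ⟨⟨h1, h2, h3⟩, h4⟩ := h
      have := key m d e h1 h2 h3 h4
      congr 1
      simp only [Prod.mk.injEq]
      omega
  have h2 : ∑ d ∈ Finset.Ico 1 (2 * K), chi d * ((d : ℤ) * (2 * K - d) * (4 * K - d)) =
      3 * K := by
    have h3 := sum_chi_cubic K K
    rcases Nat.eq_zero_or_pos K with rfl | hK
    · simp
    rw [Finset.sum_range_eq_add_Ico _ (by omega)] at h3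
    simp only [Nat.cast_zero, zero_mul, mul_zero, zero_add] at h3
    rw [h3]
    ring
  have h3 : ∑ d ∈ Finset.Ico 1 (2 * K), chi (2 * K - d) * ((2 * K - d) * d * (2 * K + d)) =
      3 * (K : ℤ) := by
    rw [← h2]
    refine Finset.sum_nbij' (fun d => 2 * K - d) (fun d => 2 * K - d) ?_ ?_ ?_ ?_ ?_
    · intro d h; simp only [Finset.mem_Ico] at h ⊢; omega
    · intro d h; simp only [Finset.mem_Ico] at h ⊢; omega
    · intro d h; simp only [Finset.mem_Ico] at h ⊢; omega
    · intro d h; simp only [Finset.mem_Ico] at h ⊢; omega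
    · intro d h
      simp only [Finset.mem_Ico] at h
      rw [Nat.cast_sub (by omega)]
      push_cast
      ring
  have h4 : ∑ d ∈ Finset.Ico 1 (2 * K), altForm ((d : ℤ) - K, (d : ℤ), 2 * K - d) =
      2 * K * (∑ d ∈ Finset.Ico 1 (2 * K), chi d * ((d : ℤ) * (2 * K - d) * (4 * K - d)) +
        ∑ d ∈ Finset.Ico 1 (2 * K), chi (2 * K - d) * ((2 * K - d) * d * (2 * K + d))) := by
    rw [← Finset.sum_add_distrib, Finset.mul_sum]
    refine Finset.sum_congr rfl fun d _ => ?_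
    simp only [altForm, alt, quart]
    rw [show (d : ℤ) - 2 * (d - K) - (2 * K - d) = 0 by ring, chi_neg,
      show chi 0 = 0 by decide]
    ring
  rw [h1, h4, h2, h3]
  ring

lemma sum_boundary_nonsq {n : ℤ} (hn : ∀ k : ℤ, n ≠ k ^ 2) :
    ∑ t ∈ (simpleForms n).filter (fun t => t.2.1 - 2 * t.1 - t.2.2 = 0), altForm t = 0 := by
  rw [Finset.filter_eq_empty_iff.mpr, Finset.sum_empty]
  rintro ⟨m, d, e⟩ h h0
  rw [mem_simpleForms] at h
  refine hn (d - m) ?_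
  have h2 : e = d - 2 * m := by linarith
  rw [← h.2.2, h2]
  ring

lemma sum_wt_sq (K : ℕ) : ∑ t ∈ simpleForms ((K : ℤ) ^ 2), wt t = 3 * (K : ℤ) ^ 2 := by
  have := sum_altForm_eq_wt ((K : ℤ) ^ 2)
  rw [sum_altForm, sum_boundary_sq] at this
  linarith

lemma sum_wt_nonsq {n : ℤ} (hn : ∀ k : ℤ, n ≠ k ^ 2) : ∑ t ∈ simpleForms n, wt t = 0 := by
  have := sum_altForm_eq_wt n
  rw [sum_altForm, sum_boundary_nonsq hn] at this
  linarith

/-! ### Jacobi's divisor sum and its recurrence -/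

/-- Ordered factorisations `k = d e` into positive integers; empty for `k ≤ 0`. -/
noncomputable def factorPairs (k : ℤ) : Finset (ℤ × ℤ) :=
  (Finset.Icc 1 k ×ˢ Finset.Icc 1 k).filter fun p => p.1 * p.2 = k

lemma mem_factorPairs {k d e : ℤ} : (d, e) ∈ factorPairs k ↔ 0 < d ∧ 0 < e ∧ d * e = k := by
  simp only [factorPairs, Finset.mem_filter, Finset.mem_product, Finset.mem_Icc]
  constructor
  · rintro ⟨⟨⟨h1, _⟩, h2, _⟩, h3⟩
    exact ⟨by omega, by omega, h3⟩
  · rintro ⟨h1, h2, h3⟩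
    exact ⟨⟨⟨by omega, by nlinarith⟩, by omega, by nlinarith⟩, h3⟩

/-- Jacobi's divisor sum for six squares, `16 ∑ χ(k/d) d² - 4 ∑ χ(d) d²` over `d ∣ k`, with the
value `1` at `0`; it vanishes at negative integers. -/
noncomputable def jacobiSix (k : ℤ) : ℤ :=
  if k = 0 then 1 else 4 * ∑ p ∈ factorPairs k, chi p.2 * (4 * p.1 ^ 2 - p.2 ^ 2)

lemma jacobiSix_of_neg {k : ℤ} (hk : k < 0) : jacobiSix k = 0 := by
  have : factorPairs k = ∅ := by
    rw [Finset.eq_empty_iff_forall_notMem]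
    rintro ⟨d, e⟩ h
    rw [mem_factorPairs] at h
    nlinarith [mul_pos h.1 h.2.1]
  simp [jacobiSix, hk.ne, this]

lemma sum_simpleForms (n : ℤ) (f : ℤ → ℤ × ℤ → ℤ) :
    ∑ t ∈ simpleForms n, f t.1 t.2 =
      ∑ m ∈ Finset.Icc (-n) n, ∑ p ∈ factorPairs (n - m ^ 2), f m p := by
  refine Finset.sum_finset_product' _ _ _ ?_
  rintro ⟨m, d, e⟩
  rw [mem_simpleForms, mem_factorPairs, Finset.mem_Icc]
  constructor
  · rintro ⟨h1, h2, h3⟩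
    have := mul_pos h1 h2
    exact ⟨⟨by nlinarith, by nlinarith⟩, h1, h2, by linarith⟩
  · rintro ⟨_, h1, h2, h3⟩
    exact ⟨h1, h2, by linarith⟩

/-- The recurrence coming from `θ · D(θ⁶) = 6 · θ⁶ · Dθ`, verified for Jacobi's divisor sum. -/
lemma jacobiSix_recurrence {n : ℤ} (hn : 0 < n) :
    ∑ m ∈ Finset.Icc (-n) n, (n - 7 * m ^ 2) * jacobiSix (n - m ^ 2) = 0 := by
  have h1 : ∑ m ∈ Finset.Icc (-n) n, (n - 7 * m ^ 2) * jacobiSix (n - m ^ 2) =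
      ∑ m ∈ Finset.Icc (-n) n, (if n = m ^ 2 then -6 * n else 0) +
      ∑ m ∈ Finset.Icc (-n) n, ∑ p ∈ factorPairs (n - m ^ 2), 4 * wt (m, p) := by
    rw [← Finset.sum_add_distrib]
    refine Finset.sum_congr rfl fun m _ => ?_
    by_cases h : n = m ^ 2
    · have h0 : factorPairs (n - m ^ 2) = ∅ := by
        rw [Finset.eq_empty_iff_forall_notMem]
        rintro ⟨d, e⟩ hp
        rw [mem_factorPairs] at hp
        nlinarith [mul_pos hp.1 hp.2.1]
      rw [h0, if_pos h, jacobiSix, if_pos (by linarith)]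
      simp only [Finset.sum_empty]
      linarith
    · rw [if_neg h, jacobiSix, if_neg (fun h' => h (by linarith)), zero_add, Finset.mul_sum,
        Finset.mul_sum]
      refine Finset.sum_congr rfl ?_
      rintro ⟨d, e⟩ hp
      rw [mem_factorPairs] at hp
      have hn' : n = d * e + m ^ 2 := by linarith [hp.2.2]
      simp only [wt]
      rw [hn']
      ring
  -- The value `jacobiSix 0 = 1` enters at `m² = n` with weight `n - 7 n = -6 n`.
  rw [h1, ← sum_simpleForms n (fun m p => 4 * wt (m, p)), ← Finset.mul_sum]
  by_cases hsq : ∃ k : ℤ, n = k ^ 2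
  · obtain ⟨k, hk⟩ := hsq
    obtain ⟨K, hK⟩ : ∃ K : ℕ, n = (K : ℤ) ^ 2 := ⟨k.natAbs, by rw [hk]; simp⟩
    have hK0 : 0 < K := by
      rcases Nat.eq_zero_or_pos K with rfl | h
      · simp at hK; omega
      · exact h
    have h2 : (Finset.Icc (-n) n).filter (fun m => n = m ^ 2) = {(K : ℤ), -(K : ℤ)} := by
      ext m
      simp only [Finset.mem_filter, Finset.mem_Icc, Finset.mem_insert, Finset.mem_singleton]
      rw [hK, eq_comm, sq_eq_sq_iff_eq_or_eq_neg]
      constructor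
      · exact fun h => h.2
      · refine fun h => ⟨?_, h⟩
        have : (1 : ℤ) ≤ K := by exact_mod_cast hK0
        rcases h with rfl | rfl <;> constructor <;> nlinarith
    rw [← Finset.sum_filter, h2, Finset.sum_pair (by omega)]
    have h3 := sum_wt_sq K
    rw [← hK] at h3
    simp only [Prod.mk.eta]
    rw [h3]
    ring
  · push Not at hsq
    simp only [Prod.mk.eta]
    rw [sum_wt_nonsq hsq, mul_zero, add_zero]
    exact Finset.sum_eq_zero fun m _ => if_neg (hsq m)

/-! ### Representations by squares and the six-square theorem -/

/-- Representations of the integer `k` as an ordered sum of `s` squares, as a finite set. -/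
noncomputable def reps (s : ℕ) (k : ℤ) : Finset (Fin s → ℤ) :=
  (Fintype.piFinset fun _ => Finset.Icc (-k) k).filter fun x => ∑ i, x i ^ 2 = k

lemma mem_reps {s : ℕ} {k : ℤ} {x : Fin s → ℤ} : x ∈ reps s k ↔ ∑ i, x i ^ 2 = k := by
  simp only [reps, Finset.mem_filter, Fintype.mem_piFinset, Finset.mem_Icc, and_iff_right_iff_imp]
  intro h i
  have h1 : x i ^ 2 ≤ k := by
    rw [← h]
    exact Finset.single_le_sum (f := fun i => x i ^ 2) (fun j _ => sq_nonneg _) (Finset.mem_univ i)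
  constructor <;> nlinarith [sq_nonneg (x i + 1), sq_nonneg (x i - 1)]

lemma sumOfSquaresRep_eq (s n : ℕ) : sumOfSquaresRep s n = (reps s n).card := by
  rw [sumOfSquaresRep, ← Set.ncard_coe_finset]
  congr 1
  ext x
  simp [mem_reps]

lemma reps_of_neg {s : ℕ} {k : ℤ} (hk : k < 0) : reps s k = ∅ := by
  rw [Finset.eq_empty_iff_forall_notMem]
  intro x h
  rw [mem_reps] at h
  have : 0 ≤ ∑ i, x i ^ 2 := Finset.sum_nonneg fun i _ => sq_nonneg _
  omega

lemma card_reps_zero (s : ℕ) : (reps s 0).card = 1 := by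
  rw [Finset.card_eq_one]
  refine ⟨0, ?_⟩
  ext x
  rw [mem_reps, Finset.mem_singleton, Finset.sum_eq_zero_iff_of_nonneg fun i _ => sq_nonneg _]
  simp [funext_iff]

/-- Splitting off the first coordinate. -/
lemma sum_reps_succ (s : ℕ) (k : ℤ) (f : ℤ → ℤ) :
    ∑ x ∈ reps (s + 1) k, f (x 0) =
      ∑ m ∈ Finset.Icc (-k) k, f m * (reps s (k - m ^ 2)).card := by
  rw [← Finset.sum_fiberwise_of_maps_to (t := Finset.Icc (-k) k) (g := fun x => x 0)]
  · refine Finset.sum_congr rfl fun m _ => ?_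
    rw [Finset.sum_congr rfl (g := fun _ => f m) (by
      intro x hx
      rw [(Finset.mem_filter.mp hx).2]), Finset.sum_const, nsmul_eq_mul, mul_comm]
    congr 2
    refine Finset.card_nbij' (fun x => Fin.tail x) (fun y => Fin.cons m y) ?_ ?_ ?_ ?_
    · intro x hx
      simp only [Finset.mem_coe, Finset.mem_filter, mem_reps, Fin.sum_univ_succ] at hx ⊢
      rw [← hx.1, hx.2]
      simp [Fin.tail]
    · intro y hy
      simp only [Finset.mem_coe, Finset.mem_filter, mem_reps, Fin.sum_univ_succ] at hy ⊢
      simp [hy]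
    · intro x hx
      simp only [Finset.mem_coe, Finset.mem_filter] at hx
      simp only [← hx.2, Fin.cons_self_tail]
    · intro y _
      simp
  · intro x hx
    simp only [reps, Finset.mem_filter, Fintype.mem_piFinset] at hx
    exact hx.1 0

lemma sum_reps_sq_eq (s : ℕ) (k : ℤ) (i : Fin (s + 1)) :
    ∑ x ∈ reps (s + 1) k, x i ^ 2 = ∑ x ∈ reps (s + 1) k, x 0 ^ 2 := by
  have hmem : ∀ x ∈ reps (s + 1) k, x ∘ Equiv.swap 0 i ∈ reps (s + 1) k := by
    intro x hx
    rw [mem_reps] at hx ⊢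
    rw [← hx]
    exact Equiv.sum_comp (Equiv.swap 0 i) fun j => x j ^ 2
  refine Finset.sum_nbij' (fun x => x ∘ Equiv.swap 0 i) (fun x => x ∘ Equiv.swap 0 i)
    hmem hmem ?_ ?_ ?_
  · intro x _; ext j; simp
  · intro x _; ext j; simp
  · intro x _; simp

/-- The numbers `r_s` satisfy the recurrence `∑ₘ (n - (s + 1) m²) r_s(n - m²) = 0`, because all
coordinates contribute equally to `∑ |x|²`, taken over the representations of `n` by `s + 1`
squares. -/
lemma reps_recurrence (s : ℕ) (n : ℤ) :
    ∑ m ∈ Finset.Icc (-n) n, (n - (s + 1) * m ^ 2) * (reps s (n - m ^ 2)).card = 0 := by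
  rw [← sum_reps_succ s n fun m => n - (s + 1) * m ^ 2, Finset.sum_sub_distrib, ← Finset.mul_sum]
  have h : ∑ x ∈ reps (s + 1) n, n = ∑ x ∈ reps (s + 1) n, ∑ i, x i ^ 2 :=
    Finset.sum_congr rfl fun x hx => (mem_reps.mp hx).symm
  rw [h, Finset.sum_comm, Finset.sum_congr rfl fun i _ => sum_reps_sq_eq s n i]
  simp

/-- The recurrence determines `f n` from the values of `f` at smaller arguments, through the
term `m = 0`. -/
lemma recurrence_unique {c : ℤ} {f g : ℤ → ℤ} (h0 : f 0 = g 0) (hneg : ∀ k < 0, f k = g k)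
    (hf : ∀ n, 0 < n → ∑ m ∈ Finset.Icc (-n) n, (n - c * m ^ 2) * f (n - m ^ 2) = 0)
    (hg : ∀ n, 0 < n → ∑ m ∈ Finset.Icc (-n) n, (n - c * m ^ 2) * g (n - m ^ 2) = 0)
    (n : ℕ) : f n = g n := by
  induction n using Nat.strong_induction_on with
  | _ n ih =>
    rcases Nat.eq_zero_or_pos n with rfl | hn
    · exact_mod_cast h0
    have hn' : (0 : ℤ) < n := by exact_mod_cast hn
    have h : ∑ m ∈ Finset.Icc (-(n : ℤ)) n, (n - c * m ^ 2) * (f (n - m ^ 2) - g (n - m ^ 2)) =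
        0 := by
      simp only [mul_sub, Finset.sum_sub_distrib] at hf hg ⊢
      rw [hf n hn', hg n hn', sub_zero]
    rw [Finset.sum_eq_single 0] at h
    · simp only [ne_eq, OfNat.ofNat_ne_zero, not_false_eq_true, zero_pow, mul_zero, sub_zero,
        mul_eq_zero] at h
      rcases h with h | h
      · omega
      · linarith
    · intro m _ hm
      have hm2 : 0 < m ^ 2 := by positivity
      rcases lt_or_ge ((n : ℤ) - m ^ 2) 0 with hlt | hge
      · rw [hneg _ hlt, sub_self, mul_zero]
      · obtain ⟨k, hk⟩ := Int.eq_ofNat_of_zero_le hge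
        rw [hk, ih k (by omega), sub_self, mul_zero]
    · intro h'
      exact absurd (Finset.mem_Icc.mpr ⟨by omega, by omega⟩) h'

/-- Jacobi's six-square theorem. -/
theorem card_reps_six (n : ℕ) : ((reps 6 n).card : ℤ) = jacobiSix n := by
  refine recurrence_unique (c := 7) (f := fun k => ((reps 6 k).card : ℤ)) ?_ ?_ ?_ ?_ n
  · simp [card_reps_zero, jacobiSix]
  · intro k hk
    simp [reps_of_neg hk, jacobiSix_of_neg hk]
  · intro n _
    have := reps_recurrence 6 n
    norm_num at this
    exact this
  · intro n hn
    exact jacobiSix_recurrence hn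

/-! ### The bound for six squares -/

lemma factorPairs_swap (n : ℤ) (f : ℤ × ℤ → ℤ) :
    ∑ p ∈ factorPairs n, f p.swap = ∑ p ∈ factorPairs n, f p := by
  have hmem : ∀ p ∈ factorPairs n, p.swap ∈ factorPairs n := by
    rintro ⟨d, e⟩ h
    rw [Prod.swap_prod_mk, mem_factorPairs]
    rw [mem_factorPairs] at h
    exact ⟨h.2.1, h.1, by rw [mul_comm]; exact h.2.2⟩
  exact Finset.sum_nbij' Prod.swap Prod.swap hmem hmem (by simp) (by simp) (by simp)

/-- If the cofactors satisfying `q` all lie in the image of `u`, the sum of the corresponding `d²`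
is at most `n² ∑ 1 / u(j)²`. -/
lemma sum_sq_factorPairs_le {n : ℤ} (q : ℤ → Prop) [DecidablePred q] (u : ℕ → ℕ) (idx : ℤ → ℕ)
    (N : ℕ) (hidx : ∀ d e, (d, e) ∈ factorPairs n → q e → idx e < N ∧ e = u (idx e)) :
    ∑ p ∈ (factorPairs n).filter (fun p => q p.2), (p.1 : ℝ) ^ 2 ≤
      (n : ℝ) ^ 2 * ∑ j ∈ Finset.range N, 1 / (u j : ℝ) ^ 2 := by
  have h1 : ∑ p ∈ (factorPairs n).filter (fun p => q p.2), (p.1 : ℝ) ^ 2 =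
      ∑ p ∈ (factorPairs n).filter (fun p => q p.2),
        (n : ℝ) ^ 2 * (1 / (u (idx p.2) : ℝ) ^ 2) := by
    refine Finset.sum_congr rfl ?_
    rintro ⟨d, e⟩ h
    rw [Finset.mem_filter] at h
    have h2 := (hidx d e h.1 h.2).2
    rw [mem_factorPairs] at h
    have h3 : ((u (idx e) : ℕ) : ℝ) = (e : ℝ) := by exact_mod_cast h2.symm
    have h4 : (e : ℝ) ≠ 0 := by exact_mod_cast h.1.2.1.ne'
    simp only [h3]
    rw [← h.1.2.2]
    push_cast
    field_simp
  have hinj : Set.InjOn (fun p : ℤ × ℤ => idx p.2)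
      ((factorPairs n).filter (fun p => q p.2) : Finset (ℤ × ℤ)) := by
    rintro ⟨d, e⟩ h ⟨d', e'⟩ h' heq
    simp only [Finset.mem_coe, Finset.mem_filter] at h h' heq
    have h2 := (hidx d e h.1 h.2).2
    have h2' := (hidx d' e' h'.1 h'.2).2
    have he : e = e' := by rw [h2, h2', heq]
    rw [mem_factorPairs] at h h'
    subst he
    have : d = d' := by
      have := h.1.2.2.trans h'.1.2.2.symm
      exact mul_right_cancel₀ h.1.2.1.ne' this
    rw [this]
  rw [h1, ← Finset.mul_sum]
  refine mul_le_mul_of_nonneg_left ?_ (sq_nonneg _)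
  rw [← Finset.sum_image (f := fun j => 1 / (u j : ℝ) ^ 2) hinj]
  refine Finset.sum_le_sum_of_subset_of_nonneg ?_ fun _ _ _ => by positivity
  intro j hj
  rw [Finset.mem_image] at hj
  obtain ⟨⟨d, e⟩, h, rfl⟩ := hj
  rw [Finset.mem_filter] at h
  exact Finset.mem_range.mpr (hidx d e h.1 h.2).1

/-- Telescoping against `1 / ((4j - 1) (4j + 3))`. -/
lemma sum_one_mod_four (J : ℕ) :
    ∑ j ∈ Finset.range (J + 2), 1 / ((4 * j + 1 : ℕ) : ℝ) ^ 2 ≤ 1.0758 := by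
  have h : ∑ j ∈ Finset.range (J + 2), 1 / ((4 * j + 1 : ℕ) : ℝ) ^ 2 ≤
      1.04 + 1 / 28 - 1 / (4 * (4 * (J : ℝ) + 7)) := by
    induction J with
    | zero =>
      simp only [Finset.sum_range_succ, Finset.sum_range_zero]
      norm_num
    | succ J ih =>
      rw [show J + 1 + 2 = (J + 2) + 1 by ring, Finset.sum_range_succ]
      have h2 : 1 / ((4 * (J + 2) + 1 : ℕ) : ℝ) ^ 2 ≤
          1 / (4 * (4 * (J : ℝ) + 7)) - 1 / (4 * (4 * ((J + 1 : ℕ) : ℝ) + 7)) := by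
        push_cast
        rw [div_sub_div _ _ (by positivity) (by positivity),
          div_le_div_iff₀ (by positivity) (by positivity)]
        nlinarith [(Nat.cast_nonneg J : (0 : ℝ) ≤ J)]
      linarith
  have h2 : (0 : ℝ) ≤ 1 / (4 * (4 * (J : ℝ) + 7)) := by positivity
  have h3 : (1.04 : ℝ) + 1 / 28 ≤ 1.0758 := by norm_num
  linarith

lemma sum_ge_two (N : ℕ) : ∑ j ∈ Finset.range N, 1 / ((j + 2 : ℕ) : ℝ) ^ 2 ≤ 1 := by
  have h : ∑ j ∈ Finset.range N, 1 / ((j + 2 : ℕ) : ℝ) ^ 2 ≤ 1 - 1 / ((N : ℝ) + 1) := by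
    induction N with
    | zero => simp
    | succ N ih =>
      rw [Finset.sum_range_succ]
      have h2 : 1 / ((N + 2 : ℕ) : ℝ) ^ 2 ≤ 1 / ((N : ℝ) + 1) - 1 / (((N + 1 : ℕ) : ℝ) + 1) := by
        push_cast
        rw [div_sub_div _ _ (by positivity) (by positivity),
          div_le_div_iff₀ (by positivity) (by positivity)]
        nlinarith [(Nat.cast_nonneg N : (0 : ℝ) ≤ N)]
      linarith
  have h2 : (0 : ℝ) ≤ 1 / ((N : ℝ) + 1) := by positivity
  linarith

lemma chi_le (a : ℤ) : chi a ≤ if a % 4 = 1 then 1 else 0 := by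
  rw [chi, ZMod.χ₄_int_eq_if_mod_four]
  split_ifs <;> omega

lemma neg_chi_le (a : ℤ) : -chi a ≤ if a % 4 = 3 then 1 else 0 := by
  rw [chi, ZMod.χ₄_int_eq_if_mod_four]
  split_ifs <;> omega

/-- The divisors `e ≡ 1 (mod 4)` give the bound `∑ χ(n/d) d² ≤ n² ∑ 1/e²`. -/
lemma sum_chi_cofactor_le (n : ℕ) :
    ((∑ p ∈ factorPairs n, chi p.2 * p.1 ^ 2 : ℤ) : ℝ) ≤ 1.0758 * (n : ℝ) ^ 2 := by
  have h1 : ∑ p ∈ factorPairs n, chi p.2 * p.1 ^ 2 ≤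
      ∑ p ∈ (factorPairs n).filter (fun p => p.2 % 4 = 1), p.1 ^ 2 := by
    rw [Finset.sum_filter]
    refine Finset.sum_le_sum fun p _ => ?_
    have := mul_le_mul_of_nonneg_right (chi_le p.2) (sq_nonneg p.1)
    rwa [ite_mul, one_mul, zero_mul] at this
  have h2 := sum_sq_factorPairs_le (n := n) (fun e => e % 4 = 1) (fun j => 4 * j + 1)
    (fun e => (e / 4).toNat) (n + 2) (by
      intro d e h he
      rw [mem_factorPairs] at h
      have : e ≤ n := by nlinarith
      omega)
  have h3 := mul_le_mul_of_nonneg_left (sum_one_mod_four n) (sq_nonneg (n : ℝ))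
  have h1' : ((∑ p ∈ factorPairs n, chi p.2 * p.1 ^ 2 : ℤ) : ℝ) ≤
      ∑ p ∈ (factorPairs (n : ℤ)).filter (fun p => p.2 % 4 = 1), (p.1 : ℝ) ^ 2 := by
    exact_mod_cast h1
  rw [Int.cast_natCast] at h2
  linarith

/-- A divisor `d ≡ 3 (mod 4)` of `n` has cofactor `≡ 1 (mod 4)` if `n ≡ 3 (mod 4)`, and cofactor at
least `2` otherwise. -/
lemma neg_sum_chi_le (n : ℕ) :
    ((-∑ p ∈ factorPairs n, chi p.2 * p.2 ^ 2 : ℤ) : ℝ) ≤ 1.0758 * (n : ℝ) ^ 2 := by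
  rw [← factorPairs_swap n fun p => chi p.2 * p.2 ^ 2]
  simp only [Prod.snd_swap]
  have key : ∀ q : ℤ → Prop, ∀ _ : DecidablePred q,
      (∀ d e : ℤ, d * e = n → 0 < e → d % 4 = 3 → q e) →
      ((-∑ p ∈ factorPairs n, chi p.1 * p.1 ^ 2 : ℤ) : ℝ) ≤
      ∑ p ∈ (factorPairs (n : ℤ)).filter (fun p => q p.2), (p.1 : ℝ) ^ 2 := by
    intro q _ hq
    have h1 : -∑ p ∈ factorPairs n, chi p.1 * p.1 ^ 2 ≤
        ∑ p ∈ (factorPairs n).filter (fun p => q p.2), p.1 ^ 2 := by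
      rw [Finset.sum_filter, ← Finset.sum_neg_distrib]
      refine Finset.sum_le_sum ?_
      rintro ⟨d, e⟩ h
      rw [mem_factorPairs] at h
      have h2 := mul_le_mul_of_nonneg_right (neg_chi_le d) (sq_nonneg d)
      rw [ite_mul, one_mul, zero_mul] at h2
      have h3 := sq_nonneg d
      have h4 := hq d e h.2.2 h.2.1
      simp only
      by_cases h5 : d % 4 = 3
      · rw [if_pos h5] at h2
        rw [if_pos (h4 h5)]
        linarith
      · rw [if_neg h5] at h2
        split_ifs <;> linarith
    exact_mod_cast h1
  by_cases hn : (n : ℤ) % 4 = 3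
  · have h1 := key (fun e => e % 4 = 1) inferInstance (by
      intro d e h _ hd
      rw [← h, Int.mul_emod, hd] at hn
      have h4 : e % 4 = 0 ∨ e % 4 = 1 ∨ e % 4 = 2 ∨ e % 4 = 3 := by omega
      rcases h4 with h4 | h4 | h4 | h4 <;> rw [h4] at hn <;> omega)
    have h2 := sum_sq_factorPairs_le (n := n) (fun e => e % 4 = 1) (fun j => 4 * j + 1)
      (fun e => (e / 4).toNat) (n + 2) (by
        intro d e h he
        rw [mem_factorPairs] at h
        have : e ≤ n := by nlinarith
        omega)
    have h3 := mul_le_mul_of_nonneg_left (sum_one_mod_four n) (sq_nonneg (n : ℝ))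
    rw [Int.cast_natCast] at h2
    linarith
  · have h1 := key (fun e => 2 ≤ e) inferInstance (by
      intro d e h he hd
      by_contra h2
      have : e = 1 := by omega
      subst this
      rw [mul_one] at h
      omega)
    have h2 := sum_sq_factorPairs_le (n := n) (fun e => 2 ≤ e) (fun j => j + 2)
      (fun e => (e - 2).toNat) n (by
        intro d e h he
        rw [mem_factorPairs] at h
        have : e ≤ n := by nlinarith
        omega)
    have h3 := mul_le_mul_of_nonneg_left (sum_ge_two n) (sq_nonneg (n : ℝ))
    rw [Int.cast_natCast] at h2
    nlinarith [sq_nonneg (n : ℝ)]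

/-- The constant is `(16 + 4) * 1.0758`. -/
lemma card_reps_six_le (n : ℕ) : ((reps 6 n).card : ℝ) ≤ 21.516 * ((n : ℝ) + 6) ^ 2 := by
  have hn : (0 : ℝ) ≤ n := Nat.cast_nonneg n
  have h1 : ((reps 6 n).card : ℝ) = ((jacobiSix n : ℤ) : ℝ) := by
    rw [← card_reps_six, Int.cast_natCast]
  rw [h1, jacobiSix]
  split_ifs with h0
  · norm_num
    nlinarith
  · have h2 : 4 * ∑ p ∈ factorPairs n, chi p.2 * (4 * p.1 ^ 2 - p.2 ^ 2) =
        16 * (∑ p ∈ factorPairs n, chi p.2 * p.1 ^ 2) +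
          4 * (-∑ p ∈ factorPairs n, chi p.2 * p.2 ^ 2) := by
      rw [← Finset.sum_neg_distrib, Finset.mul_sum, Finset.mul_sum, Finset.mul_sum,
        ← Finset.sum_add_distrib]
      refine Finset.sum_congr rfl fun p _ => ?_
      ring
    have h3 := sum_chi_cofactor_le n
    have h4 := neg_sum_chi_le n
    rw [h2, Int.cast_add, Int.cast_mul, Int.cast_mul]
    push_cast at h3 h4 ⊢
    nlinarith

/-! ### Induction on the number of squares -/

/-- Comparison of a truncated theta series with the Gaussian integral. -/
lemma gaussian_sum_le {b : ℝ} (hb : 0 < b) (M : ℕ) :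
    ∑ m ∈ Finset.Icc (-(M : ℤ)) M, rexp (-b * (m : ℝ) ^ 2) ≤ 1 + √(π / b) := by
  rw [Finset.sum_Icc_of_even_eq_range (f := fun m : ℤ => rexp (-b * (m : ℝ) ^ 2))
    (fun m => by simp), Finset.sum_range_succ']
  have hanti : AntitoneOn (fun x : ℝ => rexp (-b * x ^ 2)) (Set.Icc 0 (0 + (M : ℝ))) := by
    intro x hx y _ hxy
    have := pow_le_pow_left₀ hx.1 hxy 2
    simp only [exp_le_exp]
    nlinarith
  have h1 := hanti.sum_le_integral
  have h2 : ∫ x in (0 : ℝ)..(0 + (M : ℝ)), rexp (-b * x ^ 2) ≤ √(π / b) / 2 := by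
    rw [← integral_gaussian_Ioi, intervalIntegral.integral_of_le (by simp)]
    refine MeasureTheory.setIntegral_mono_set (integrable_exp_neg_mul_sq hb).integrableOn
      (Filter.Eventually.of_forall fun x => (exp_pos _).le)
      (Filter.Eventually.of_forall fun x hx => hx.1)
  simp only [zero_add] at h1 h2
  simp only [nsmul_eq_mul, Int.cast_natCast, Nat.cast_zero, Int.cast_zero]
  norm_num
  push_cast at h1
  simp only [neg_mul] at h1 h2
  have h3 : √(π / b) = √π / √b := Real.sqrt_div' _ hb.le
  rw [h3] at h2
  linarith

/-- The numerical inequality behind the induction on `s`: `4.11` dominates the sum of `√(7π/2)` and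
the contribution `√((s + 1) / (N + 1))` of the central term, once the latter is weighed against the
gain `exp (p / (N + 1))`. -/
lemma step_ineq {s N p : ℝ} (hs : 6 ≤ s) (hN : s ≤ N) (hp : p = s / 2 - 1) :
    rexp (-(p / (N + 1))) * (1 + √(π / (p / (N + 1)))) ≤ 4.11 / √(s + 1) * √(N + 1) := by
  have hp0 : 0 < p := by linarith
  have hN1 : 0 < N + 1 := by linarith
  have hy : 0 < √(N + 1) := Real.sqrt_pos.mpr (by linarith)
  have hσ : 0 < √(s + 1) := Real.sqrt_pos.mpr (by linarith)
  have hy2 : √(N + 1) ^ 2 = N + 1 := Real.sq_sqrt (by linarith)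
  have hσ2 : √(s + 1) ^ 2 = s + 1 := Real.sq_sqrt (by linarith)
  -- `(s + 1) / p ≤ 7 / 2` with equality at `s = 6`, and `7 π / 2 < 3.3165²`.
  have hg : √(π / (p / (N + 1))) * √(s + 1) ≤ 3.3165 * √(N + 1) := by
    rw [← Real.sqrt_mul (by positivity)]
    refine Real.sqrt_le_iff.mpr ⟨by positivity, ?_⟩
    rw [mul_pow, hy2, div_div_eq_mul_div, div_mul_eq_mul_div, div_le_iff₀ hp0]
    have hπ : π < 3.1416 := Real.pi_lt_d4
    have h1 : π * (s + 1) ≤ 3.3165 ^ 2 * p := by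
      have : π * (s + 1) ≤ 3.1416 * (s + 1) := mul_le_mul_of_nonneg_right hπ.le (by linarith)
      norm_num
      linarith
    have h2 := mul_le_mul_of_nonneg_right h1 (by linarith : (0 : ℝ) ≤ N + 1)
    linarith
  rw [Real.exp_neg, inv_mul_le_iff₀ (exp_pos _), ← mul_div_right_comm, ← mul_div_assoc,
    le_div_iff₀ hσ]
  have hexp := Real.add_one_le_exp (p / (N + 1))
  have h4 : 4.11 * √(N + 1) * (p / (N + 1) + 1) ≤
      rexp (p / (N + 1)) * (4.11 * √(N + 1)) := by
    rw [mul_comm]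
    exact mul_le_mul_of_nonneg_right hexp (by positivity)
  refine le_trans ?_ h4
  have h5 : 2 / 7 * (√(s + 1) ^ 2 / √(N + 1)) ≤ √(N + 1) * (p / (N + 1)) := by
    have h6 : √(N + 1) * (p / (N + 1)) = p / √(N + 1) := by
      have h7 : p / (N + 1) * (N + 1) = p := div_mul_cancel₀ _ hN1.ne'
      rw [eq_div_iff hy.ne']
      linear_combination (p / (N + 1)) * hy2 + h7
    rw [h6, ← mul_div_assoc, hσ2]
    exact div_le_div_of_nonneg_right (by linarith) hy.le
  have h6 : √(s + 1) ≤ 1 / 2 * √(N + 1) + 1 / 2 * (√(s + 1) ^ 2 / √(N + 1)) := by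
    have h7 : √(s + 1) ^ 2 / √(N + 1) * √(N + 1) = √(s + 1) ^ 2 := div_mul_cancel₀ _ hy.ne'
    refine le_of_mul_le_mul_right ?_ hy
    nlinarith [sq_nonneg (√(s + 1) - √(N + 1))]
  have h8 : 0 ≤ √(s + 1) ^ 2 / √(N + 1) := by positivity
  linarith

/-- Pointwise domination by a Gaussian, from `1 - x ≤ exp (-x)`. -/
lemma rpow_sub_sq_le {N p m : ℝ} (hN : 0 < N) (hp : 0 ≤ p) (hm : 0 ≤ N - m ^ 2) :
    (N - m ^ 2) ^ p ≤
      (N + 1) ^ p * (rexp (-(p / (N + 1))) * rexp (-(p / (N + 1)) * m ^ 2)) := by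
  have h1 : N - m ^ 2 ≤ (N + 1) * rexp (-((m ^ 2 + 1) / (N + 1))) := by
    have h2 := Real.add_one_le_exp (-((m ^ 2 + 1) / (N + 1)))
    have h3 := mul_le_mul_of_nonneg_left h2 (by linarith : (0 : ℝ) ≤ N + 1)
    have h4 : (N + 1) * ((m ^ 2 + 1) / (N + 1)) = m ^ 2 + 1 :=
      mul_div_cancel₀ _ (by linarith)
    linarith
  refine (Real.rpow_le_rpow hm h1 hp).trans_eq ?_
  rw [Real.mul_rpow (by linarith) (exp_pos _).le, ← Real.exp_mul, ← Real.exp_add]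
  congr 2
  ring

lemma card_reps_succ (s n : ℕ) :
    ((reps (s + 1) n).card : ℝ) =
      ∑ m ∈ Finset.Icc (-(n : ℤ)) n, ((reps s (n - m ^ 2)).card : ℝ) := by
  have := sum_reps_succ s n fun _ => 1
  simp only [Finset.sum_const, nsmul_eq_mul, mul_one, one_mul] at this
  exact_mod_cast this

/-- The constant in the bound for `s` squares. -/
noncomputable def boundConst (s : ℕ) : ℝ := 3 * (4.11 : ℝ) ^ s / (25 * √(Nat.factorial s))

lemma boundConst_nonneg (s : ℕ) : 0 ≤ boundConst s := by
  unfold boundConst; positivity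

lemma boundConst_succ (s : ℕ) : boundConst (s + 1) = boundConst s * (4.11 / √((s : ℝ) + 1)) := by
  unfold boundConst
  rw [Nat.factorial_succ, Nat.cast_mul, Real.sqrt_mul (by positivity), pow_succ]
  push_cast
  rw [div_mul_div_comm]
  congr 1 <;> ring

lemma boundConst_six : 21.516 ≤ boundConst 6 := by
  unfold boundConst
  have h : √((Nat.factorial 6 : ℕ) : ℝ) ≤ 26.8329 := by
    refine Real.sqrt_le_iff.mpr ⟨by norm_num, ?_⟩
    norm_num [Nat.factorial]
  rw [le_div_iff₀ (by positivity)]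
  norm_num at h ⊢
  linarith

lemma card_reps_le (s : ℕ) (hs : 6 ≤ s) : ∀ n : ℕ,
    ((reps s n).card : ℝ) ≤ boundConst s * ((n : ℝ) + s) ^ ((s : ℝ) / 2 - 1) := by
  induction s, hs using Nat.le_induction with
  | base =>
    intro n
    refine (card_reps_six_le n).trans ?_
    rw [show ((6 : ℕ) : ℝ) / 2 - 1 = ((2 : ℕ) : ℝ) by norm_num, Real.rpow_natCast]
    exact mul_le_mul_of_nonneg_right boundConst_six (by positivity)
  | succ s hs ih =>
    intro n
    have hs' : (6 : ℝ) ≤ s := by exact_mod_cast hs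
    have hn : (0 : ℝ) ≤ n := Nat.cast_nonneg n
    obtain ⟨N, hN⟩ : ∃ N : ℝ, N = n + s := ⟨_, rfl⟩
    obtain ⟨p, hp⟩ : ∃ p : ℝ, p = (s : ℝ) / 2 - 1 := ⟨_, rfl⟩
    have hp0 : 0 < p := by linarith
    have hN0 : 0 < N := by linarith
    have hterm : ∀ m ∈ Finset.Icc (-(n : ℤ)) n, ((reps s (n - m ^ 2)).card : ℝ) ≤
        boundConst s * ((N + 1) ^ p * rexp (-(p / (N + 1)))) *
          rexp (-(p / (N + 1)) * (m : ℝ) ^ 2) := by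
      intro m _
      have hC := boundConst_nonneg s
      rcases lt_or_ge ((n : ℤ) - m ^ 2) 0 with hlt | hge
      · rw [reps_of_neg hlt, Finset.card_empty, Nat.cast_zero]
        positivity
      · obtain ⟨k, hk⟩ := Int.eq_ofNat_of_zero_le hge
        have hk' : (k : ℝ) + s = N - (m : ℝ) ^ 2 := by
          have : (n : ℝ) - (m : ℝ) ^ 2 = k := by exact_mod_cast hk
          linarith
        have h1 := ih k
        rw [← hp, hk'] at h1
        rw [hk]
        refine h1.trans ?_
        rw [mul_assoc, mul_assoc]
        refine mul_le_mul_of_nonneg_left (rpow_sub_sq_le hN0 hp0.le ?_) hC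
        rw [← hk']
        positivity
    rw [card_reps_succ]
    refine (Finset.sum_le_sum hterm).trans ?_
    rw [← Finset.mul_sum]
    have hC := boundConst_nonneg s
    calc _ ≤ boundConst s * ((N + 1) ^ p * rexp (-(p / (N + 1)))) *
          (1 + √(π / (p / (N + 1)))) :=
          mul_le_mul_of_nonneg_left (gaussian_sum_le (by positivity) n) (by positivity)
      _ = boundConst s * (N + 1) ^ p *
          (rexp (-(p / (N + 1))) * (1 + √(π / (p / (N + 1))))) := by ring
      _ ≤ boundConst s * (N + 1) ^ p * (4.11 / √((s : ℝ) + 1) * √(N + 1)) :=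
          mul_le_mul_of_nonneg_left (step_ineq hs' (by linarith) hp) (by positivity)
      _ = boundConst (s + 1) * ((n : ℝ) + (s + 1 : ℕ)) ^ (((s + 1 : ℕ) : ℝ) / 2 - 1) := by
          rw [boundConst_succ, show (n : ℝ) + (s + 1 : ℕ) = N + 1 by rw [hN]; push_cast; ring,
            show ((s + 1 : ℕ) : ℝ) / 2 - 1 = p + 1 / 2 by rw [hp]; push_cast; ring,
            Real.rpow_add (by linarith), ← Real.sqrt_eq_rpow]
          ring

theorem stmt_4 (n s : ℕ) (hn : 1 ≤ n) (hs : 6 ≤ s) :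
    (sumOfSquaresRep s n : ℝ) ≤
      3 * (4.11 : ℝ) ^ s / (25 * Real.sqrt (Nat.factorial s)) *
        ((n : ℝ) + s) ^ ((s : ℝ) / 2 - 1) := by
  rw [sumOfSquaresRep_eq]
  exact card_reps_le s hs n
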